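/- arXiv:1410.2499 — 2 statements merged into one kernel-verified Lean document; each statement's English description precedes it below -/
import Mathlib

section
/- For any step of the nonsmooth Krenk–Høgsberg generalized-α scheme in augmented Newmark form with filter parameters ν ≠ 0 and η, the variation of the algorithmic energy satisfies H(q_{k+1},v_{k+1},a_{k+1},z_{k+1}) − H(q_k,v_k,a_k,z_k) − W_ext − W_damp = U_{k+1/2}ᵀ P_{k+1} − (1/2)h²(γ − 1/2)(2β − γ)‖a_{k+1}−a_k‖²_M − (γ − 1/2 − η)‖q_{k+1}−q_k‖²_K − (η/ν)(ν − γ + 1/2)‖z_{k+1}−z_k‖²_K. -/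
open Matrix

/-!
Pairing the `γ`-average of the two balance equations with the displacement increment `Δq` turns the
external and damping work into the work of `M a_γ`, `K q_γ` and `-(η / ν) K z_γ` on `Δq`, where
`x_γ` is `lineMap x_k x_{k+1} γ`. Since `x_γ = (x_k + x_{k+1}) / 2 + (γ - 1/2) Δx`, each work is
half the increment of a quadratic form plus a multiple of `‖Δx‖²`. The inertial work reduces to this
case because `Δq = h v_{k+1/2} + (h² / 2) (2β - γ) Δa` and `h a_γ = Δv - w`, and the filter work
because `Δq = Δz + z_{k+1/2} / ν`.
-/

section CommRing

open AffineMap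

variable {R V : Type*} [CommRing R] [AddCommGroup V] [Module R V]

theorem lineMap_eq_smul_add_smul (x y : V) (c : R) :
    lineMap x y c = c • y + (1 - c) • x := by
  rw [lineMap_apply_module, add_comm]

theorem newmark_smul_lineMap_acceleration {h γ : R} {v v' a a' w : V}
    (hv : v' = v + (h * (1 - γ)) • a + (h * γ) • a' + w) :
    h • lineMap a a' γ = v' - v - w := by
  rw [hv, lineMap_apply_module]
  module

variable {ι : Type*} [Fintype ι]

theorem mulVec_lineMap {κ : Type*} (A : Matrix κ ι R) (x y : ι → R) (c : R) :
    A *ᵥ lineMap x y c = lineMap (A *ᵥ x) (A *ᵥ y) c :=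
  apply_lineMap A.mulVecLin.toAffineMap x y c

theorem isSymm_toBilin' [DecidableEq ι] {A : Matrix ι ι R} (hA : A.IsSymm) :
    (toBilin' A).IsSymm := by
  rw [← toBilin_basisFun]
  exact (isSymm_toBilin_iff_isSymm _).2 hA

theorem lineMap_balance {M K C : Matrix ι ι R} {q q' v v' a a' F F' z z' : ι → R} {c : R}
    (hbal : M *ᵥ a + K *ᵥ q + C *ᵥ v = F + c • K *ᵥ z)
    (hbal' : M *ᵥ a' + K *ᵥ q' + C *ᵥ v' = F' + c • K *ᵥ z') (γ : R) :
    M *ᵥ lineMap a a' γ + K *ᵥ lineMap q q' γ + C *ᵥ lineMap v v' γ =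
      lineMap F F' γ + c • K *ᵥ lineMap z z' γ := by
  simp only [mulVec_lineMap]
  simp only [lineMap_apply_module]
  linear_combination (norm := module) (1 - γ) • hbal + γ • hbal'

end CommRing

section EnergyBalance

open AffineMap

variable {𝕜 V : Type*} [Field 𝕜] [AddCommGroup V] [Module 𝕜 V]

theorem lineMap_eq_half_add_add_smul_sub [NeZero (2 : 𝕜)] (x y : V) (γ : 𝕜) :
    lineMap x y γ = (1 / 2 : 𝕜) • (x + y) + (γ - 1 / 2) • (y - x) := by
  rw [lineMap_apply_module]
  match_scalars <;> field_simp <;> ring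

variable {B : LinearMap.BilinForm 𝕜 V}

theorem bilin_sub_half_add (hB : B.IsSymm) (x y : V) :
    B (y - x) ((1 / 2 : 𝕜) • (x + y)) = 1 / 2 * (B y y - B x x) := by
  simp only [map_smul, map_add, map_sub, LinearMap.sub_apply, smul_eq_mul, hB.eq x y]
  ring

theorem bilin_sub_lineMap [NeZero (2 : 𝕜)] (hB : B.IsSymm) (x y : V) (γ : 𝕜) :
    B (y - x) (lineMap x y γ) =
      1 / 2 * (B y y - B x x) + (γ - 1 / 2) * B (y - x) (y - x) := by
  rw [lineMap_eq_half_add_add_smul_sub, map_add, bilin_sub_half_add hB, map_smul, smul_eq_mul]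

theorem newmark_displacement_sub [NeZero (2 : 𝕜)] {h γ β : 𝕜} {q q' v v' a a' w : V}
    (hv : v' = v + (h * (1 - γ)) • a + (h * γ) • a' + w)
    (hq : q' = q + h • v + (h ^ 2 * (1 / 2 - β)) • a + (h ^ 2 * β) • a' + (h / 2) • w) :
    q' - q = h • (1 / 2 : 𝕜) • (v + v') + (h ^ 2 / 2 * (2 * β - γ)) • (a' - a) := by
  rw [hq, hv]
  match_scalars <;> field_simp <;> ring

theorem newmark_inertial_work [NeZero (2 : 𝕜)] (hB : B.IsSymm) {h γ β : 𝕜}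
    {q q' v v' a a' w : V}
    (hv : v' = v + (h * (1 - γ)) • a + (h * γ) • a' + w)
    (hq : q' = q + h • v + (h ^ 2 * (1 / 2 - β)) • a + (h ^ 2 * β) • a' + (h / 2) • w) :
    B (q' - q) (lineMap a a' γ) =
      1 / 2 * (B v' v' - B v v) - B ((1 / 2 : 𝕜) • (v + v')) w
        + h ^ 2 / 4 * (2 * β - γ) * (B a' a' - B a a)
        + 1 / 2 * h ^ 2 * (γ - 1 / 2) * (2 * β - γ) * B (a' - a) (a' - a) := by
  have quarter : h ^ 2 / 4 = h ^ 2 / 2 * (1 / 2) := by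
    rw [div_mul_div_comm, mul_one]
    norm_num
  calc B (q' - q) (lineMap a a' γ)
      = B ((1 / 2 : 𝕜) • (v + v')) (h • lineMap a a' γ)
          + h ^ 2 / 2 * (2 * β - γ) * B (a' - a) (lineMap a a' γ) := by
        rw [newmark_displacement_sub hv hq, map_add, LinearMap.add_apply,
          LinearMap.map_smul₂, LinearMap.map_smul₂ B (h ^ 2 / 2 * (2 * β - γ)),
          (B _).map_smul, smul_eq_mul, smul_eq_mul]
    _ = _ := by
        rw [newmark_smul_lineMap_acceleration hv, map_sub, hB.eq _ (v' - v),
          bilin_sub_half_add hB, bilin_sub_lineMap hB, quarter]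
        ring

theorem midpointFilter_displacement_eq {ν : 𝕜} (hν : ν ≠ 0) {z z' d : V}
    (hz : ν • (z' - z) + (1 / 2 : 𝕜) • (z' + z) = ν • d) :
    d = z' - z + ν⁻¹ • (1 / 2 : 𝕜) • (z + z') := by
  rw [← inv_smul_smul₀ hν d, ← hz, smul_add, inv_smul_smul₀ hν, add_comm z']

theorem midpointFilter_work [NeZero (2 : 𝕜)] (hB : B.IsSymm) {ν : 𝕜} (hν : ν ≠ 0) (γ η : 𝕜)
    {z z' d : V} (hz : ν • (z' - z) + (1 / 2 : 𝕜) • (z' + z) = ν • d) :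
    η / ν * B d (lineMap z z' γ) =
      η * B d d - η / ν * (ν - γ + 1 / 2) * B (z' - z) (z' - z)
        - η / (2 * ν ^ 2) * (ν - (γ - 1 / 2)) * (B z' z' - B z z) := by
  have cross_term := bilin_sub_half_add hB z z'
  rw [midpointFilter_displacement_eq hν hz, lineMap_eq_half_add_add_smul_sub]
  generalize z' - z = δ, (1 / 2 : 𝕜) • (z + z') = μ at cross_term ⊢
  simp only [map_add, map_smul, LinearMap.add_apply, LinearMap.smul_apply, smul_eq_mul,
    hB.eq μ δ, cross_term]
  field_simp
  ring

variable {ι κ : Type*} [Fintype ι] [Fintype κ]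

/-- The total mechanical energy `E(q, v)`. -/
def mechanicalEnergy (M K : Matrix ι ι 𝕜) (q v : ι → 𝕜) : 𝕜 :=
  1 / 2 * (v ⬝ᵥ M *ᵥ v) + 1 / 2 * (q ⬝ᵥ K *ᵥ q)

/-- The algorithmic energy `H(q, v, a, z)`: the mechanical energy corrected by quadratic terms in
the acceleration and in the filter variable. -/
def algorithmicEnergy (h γ β η ν : 𝕜) (M K : Matrix ι ι 𝕜) (q v a z : ι → 𝕜) : 𝕜 :=
  mechanicalEnergy M K q v
    + h ^ 2 / 4 * (2 * β - γ) * (a ⬝ᵥ M *ᵥ a)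
    + η / (2 * ν ^ 2) * (ν - (γ - 1 / 2)) * (z ⬝ᵥ K *ᵥ z)

theorem nonsmooth_KH_generalized_alpha_algorithmic_energy_general [NeZero (2 : 𝕜)]
    {h γ β η ν : 𝕜} (hν : ν ≠ 0) {M K C : Matrix ι ι 𝕜} {G : Matrix ι κ 𝕜}
    (hM : M.IsSymm) (hK : K.IsSymm) {q q' v v' a a' F F' z z' w : ι → 𝕜} {P : κ → 𝕜}
    (hbal : M *ᵥ a + K *ᵥ q + C *ᵥ v = F + (η / ν) • K *ᵥ z)
    (hbal' : M *ᵥ a' + K *ᵥ q' + C *ᵥ v' = F' + (η / ν) • K *ᵥ z')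
    (hw : M *ᵥ w = G *ᵥ P)
    (hv : v' = v + (h * (1 - γ)) • a + (h * γ) • a' + w)
    (hq : q' = q + h • v + (h ^ 2 * (1 / 2 - β)) • a + (h ^ 2 * β) • a' + (h / 2) • w)
    (hz : ν • (z' - z) + (1 / 2 : 𝕜) • (z' + z) = ν • (q' - q)) :
    algorithmicEnergy h γ β η ν M K q' v' a' z' - algorithmicEnergy h γ β η ν M K q v a z
      - (q' - q) ⬝ᵥ lineMap F F' γ - (-((q' - q) ⬝ᵥ C *ᵥ lineMap v v' γ))
    = ((1 / 2 : 𝕜) • (Gᵀ *ᵥ v + Gᵀ *ᵥ v')) ⬝ᵥ P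
      - 1 / 2 * h ^ 2 * (γ - 1 / 2) * (2 * β - γ) * ((a' - a) ⬝ᵥ M *ᵥ (a' - a))
      - (γ - 1 / 2 - η) * ((q' - q) ⬝ᵥ K *ᵥ (q' - q))
      - (η / ν) * (ν - γ + 1 / 2) * ((z' - z) ⬝ᵥ K *ᵥ (z' - z)) := by
  classical
  have inertial_work := newmark_inertial_work (isSymm_toBilin' hM) hv hq
  have elastic_work := bilin_sub_lineMap (isSymm_toBilin' hK) q q' γ
  have filter_work := midpointFilter_work (isSymm_toBilin' hK) hν γ η hz
  have impulse_work : ((1 / 2 : 𝕜) • (Gᵀ *ᵥ v + Gᵀ *ᵥ v')) ⬝ᵥ P =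
      ((1 / 2 : 𝕜) • (v + v')) ⬝ᵥ M *ᵥ w := by
    rw [hw, ← mulVec_add, ← mulVec_smul, dotProduct_comm, dotProduct_transpose_mulVec]
  have balance_work := congrArg ((q' - q) ⬝ᵥ ·) (lineMap_balance hbal hbal' γ)
  simp only [dotProduct_add, dotProduct_smul, smul_eq_mul] at balance_work
  simp only [toBilin'_apply'] at inertial_work elastic_work filter_work
  rw [impulse_work, algorithmicEnergy, algorithmicEnergy, mechanicalEnergy, mechanicalEnergy]
  linear_combination balance_work - inertial_work - elastic_work + filter_work

end EnergyBalance

/-- Variation of the algorithmic energy over one step of the nonsmooth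
Krenk–Høgsberg generalized-α scheme in augmented Newmark form. -/
theorem nonsmooth_KH_generalized_alpha_algorithmic_energy
    (n m : ℕ) (hn : 1 ≤ n) (hm : 1 ≤ m)
    (h γ β η ν : ℝ) (hh : 0 < h) (hν : ν ≠ 0)
    (M K C : Matrix (Fin n) (Fin n) ℝ) (G : Matrix (Fin n) (Fin m) ℝ)
    (hM : M.PosDef) (hK : K.PosSemidef)
    (qk qk1 vk vk1 ak ak1 Fk Fk1 zk zk1 w : Fin n → ℝ)
    (P : Fin m → ℝ)
    (hbalk : M.mulVec ak + K.mulVec qk + C.mulVec vk = Fk + (η / ν) • K.mulVec zk)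
    (hbalk1 : M.mulVec ak1 + K.mulVec qk1 + C.mulVec vk1 = Fk1 + (η / ν) • K.mulVec zk1)
    (hw : M.mulVec w = G.mulVec P)
    (hv : vk1 = vk + (h * (1 - γ)) • ak + (h * γ) • ak1 + w)
    (hq : qk1 = qk + h • vk + (h ^ 2 * (1/2 - β)) • ak + (h ^ 2 * β) • ak1
        + (h / 2) • w)
    (hz : ν • (zk1 - zk) + (1/2 : ℝ) • (zk1 + zk) = ν • (qk1 - qk)) :
    (1/2 * (vk1 ⬝ᵥ M.mulVec vk1) + 1/2 * (qk1 ⬝ᵥ K.mulVec qk1)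
        + h ^ 2 / 4 * (2 * β - γ) * (ak1 ⬝ᵥ M.mulVec ak1)
        + η / (2 * ν ^ 2) * (ν - (γ - 1/2)) * (zk1 ⬝ᵥ K.mulVec zk1))
      - (1/2 * (vk ⬝ᵥ M.mulVec vk) + 1/2 * (qk ⬝ᵥ K.mulVec qk)
        + h ^ 2 / 4 * (2 * β - γ) * (ak ⬝ᵥ M.mulVec ak)
        + η / (2 * ν ^ 2) * (ν - (γ - 1/2)) * (zk ⬝ᵥ K.mulVec zk))
      - (qk1 - qk) ⬝ᵥ (γ • Fk1 + (1 - γ) • Fk)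
      - (-((qk1 - qk) ⬝ᵥ C.mulVec (γ • vk1 + (1 - γ) • vk)))
    = ((1/2 : ℝ) • (Gᵀ.mulVec vk + Gᵀ.mulVec vk1)) ⬝ᵥ P
      - 1/2 * h ^ 2 * (γ - 1/2) * (2 * β - γ) * ((ak1 - ak) ⬝ᵥ M.mulVec (ak1 - ak))
      - (γ - 1/2 - η) * ((qk1 - qk) ⬝ᵥ K.mulVec (qk1 - qk))
      - (η / ν) * (ν - γ + 1/2) * ((zk1 - zk) ⬝ᵥ K.mulVec (zk1 - zk)) := by
  rw [← lineMap_eq_smul_add_smul, ← lineMap_eq_smul_add_smul]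
  exact nonsmooth_KH_generalized_alpha_algorithmic_energy_general hν
    (isHermitian_iff_isSymm.1 hM.isHermitian) (isHermitian_iff_isSymm.1 hK.isHermitian)
    hbalk hbalk1 hw hv hq hz
end

section
/- For any step of the nonsmooth Newmark scheme, the variation of the algorithmic energy satisfies H(q_{k+1},v_{k+1},a_{k+1}) − H(q_k,v_k,a_k) − W_ext − W_damp = (1/2 − γ)·( ‖q_{k+1}−q_k‖²_K + (h²/2)(2β − γ)‖a_{k+1}−a_k‖²_M ) + U_{k+1/2}ᵀ P_{k+1}. -/
open Matrix

/-!
For a symmetric matrix `A` and `x_γ = γ y + (1 - γ) x`, one has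
`½ ‖y‖²_A - ½ ‖x‖²_A = (y - x)ᵀ A x_γ + (½ - γ) ‖y - x‖²_A`.
The scheme amounts to `v' - v = h a_γ + w` and
`q' - q = h v_½ + (h² / 2) (2β - γ) (a' - a)`, and the equations of motion give
`W_ext + W_damp = (q' - q)ᵀ (M a_γ + K q_γ)`. The identity for `(K, q, γ)` produces the stiffness
term; for `(M, v, ½)` it expresses the kinetic energy through `v_½ᵀ M a_γ` and the impulse; for
`(M, a, γ)` it accounts for the remaining `(a' - a)ᵀ M a_γ`.
-/

section QuadraticForm

variable {𝕜 ι : Type*} [Fintype ι]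

theorem dotProduct_mulVec_comm_of_isSymm [CommSemiring 𝕜] {A : Matrix ι ι 𝕜} (hA : A.IsSymm)
    (x y : ι → 𝕜) : x ⬝ᵥ A *ᵥ y = y ⬝ᵥ A *ᵥ x := by
  rw [← dotProduct_transpose_mulVec, hA.eq]

theorem half_dotProduct_mulVec_sub [Field 𝕜] [NeZero (2 : 𝕜)] {A : Matrix ι ι 𝕜} (hA : A.IsSymm)
    (γ : 𝕜) (x y : ι → 𝕜) :
    1 / 2 * (y ⬝ᵥ A *ᵥ y) - 1 / 2 * (x ⬝ᵥ A *ᵥ x)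
      = (y - x) ⬝ᵥ A *ᵥ (γ • y + (1 - γ) • x) + (1 / 2 - γ) * ((y - x) ⬝ᵥ A *ᵥ (y - x)) := by
  simp only [mulVec_add, mulVec_sub, mulVec_smul, dotProduct_add, dotProduct_sub, dotProduct_smul,
    sub_dotProduct, smul_eq_mul, dotProduct_mulVec_comm_of_isSymm hA y x]
  have : (2 : 𝕜) ≠ 0 := two_ne_zero
  field_simp
  ring

end QuadraticForm

/-- A linear mechanical system with equations of motion `M a + K q + C v = F`, whose velocity jumps
`w` under local impulses `P` satisfy `M w = G P`; `ι` indexes the degrees of freedom and `κ` the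
local velocities `Gᵀ v`. -/
structure MechanicalSystem (𝕜 ι κ : Type*) where
  M : Matrix ι ι 𝕜
  K : Matrix ι ι 𝕜
  C : Matrix ι ι 𝕜
  G : Matrix ι κ 𝕜

/-- The position, velocity, acceleration and external force at one instant of the time grid. -/
structure NewmarkState (𝕜 ι : Type*) where
  q : ι → 𝕜
  v : ι → 𝕜
  a : ι → 𝕜
  F : ι → 𝕜

namespace MechanicalSystem

variable {𝕜 ι κ : Type*} [Field 𝕜] [Fintype ι]

/-- The total mechanical energy `E(q, v)`. -/
def energy (S : MechanicalSystem 𝕜 ι κ) (q v : ι → 𝕜) : 𝕜 :=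
  1 / 2 * (v ⬝ᵥ S.M *ᵥ v) + 1 / 2 * (q ⬝ᵥ S.K *ᵥ q)

/-- The algorithmic energy `H(q, v, a)` of the Newmark scheme with parameters `γ`, `β`. -/
def algorithmicEnergy (S : MechanicalSystem 𝕜 ι κ) (h γ β : 𝕜) (s : NewmarkState 𝕜 ι) : 𝕜 :=
  S.energy s.q s.v + h ^ 2 / 4 * (2 * β - γ) * (s.a ⬝ᵥ S.M *ᵥ s.a)

/-- The discrete work `W_ext` of the external forces between two states. -/
def externalWork (γ : 𝕜) (s t : NewmarkState 𝕜 ι) : 𝕜 :=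
  (t.q - s.q) ⬝ᵥ (γ • t.F + (1 - γ) • s.F)

/-- The discrete work `W_damp` of the damping forces between two states. -/
def dampingWork (S : MechanicalSystem 𝕜 ι κ) (γ : 𝕜) (s t : NewmarkState 𝕜 ι) : 𝕜 :=
  -((t.q - s.q) ⬝ᵥ S.C *ᵥ (γ • t.v + (1 - γ) • s.v))

variable [Fintype κ]

/-- One step of the nonsmooth Newmark scheme from `s` to `t` with time step `h`, under the local
impulse `P` and the velocity jump `w`. -/
structure IsNewmarkStep (S : MechanicalSystem 𝕜 ι κ) (h γ β : 𝕜) (s t : NewmarkState 𝕜 ι)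
    (w : ι → 𝕜) (P : κ → 𝕜) : Prop where
  motion_start : S.M *ᵥ s.a + S.K *ᵥ s.q + S.C *ᵥ s.v = s.F
  motion_end : S.M *ᵥ t.a + S.K *ᵥ t.q + S.C *ᵥ t.v = t.F
  impulse : S.M *ᵥ w = S.G *ᵥ P
  velocity : t.v = s.v + (h * (1 - γ)) • s.a + (h * γ) • t.a + w
  position : t.q = s.q + h • s.v + (h ^ 2 * (1 / 2 - β)) • s.a + (h ^ 2 * β) • t.a + (h / 2) • w

namespace IsNewmarkStep

variable {S : MechanicalSystem 𝕜 ι κ} {h γ β : 𝕜} {s t : NewmarkState 𝕜 ι} {w : ι → 𝕜} {P : κ → 𝕜}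

theorem velocity_sub (hS : S.IsNewmarkStep h γ β s t w P) :
    t.v - s.v = h • (γ • t.a + (1 - γ) • s.a) + w := by
  rw [hS.velocity]
  module

theorem position_sub [NeZero (2 : 𝕜)] (hS : S.IsNewmarkStep h γ β s t w P) :
    t.q - s.q
      = h • (1 / 2 : 𝕜) • (s.v + t.v) + (h ^ 2 / 2 * (2 * β - γ)) • (t.a - s.a) := by
  have : (2 : 𝕜) ≠ 0 := two_ne_zero
  rw [hS.position, hS.velocity]
  match_scalars <;> field_simp <;> ring

theorem position_sub_dotProduct [NeZero (2 : 𝕜)] (hS : S.IsNewmarkStep h γ β s t w P) (x : ι → 𝕜) :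
    (t.q - s.q) ⬝ᵥ x
      = h * ((1 / 2 : 𝕜) • (s.v + t.v) ⬝ᵥ x)
        + h ^ 2 / 2 * (2 * β - γ) * ((t.a - s.a) ⬝ᵥ x) := by
  rw [hS.position_sub, add_dotProduct, smul_dotProduct h, smul_dotProduct (h ^ 2 / 2 * _),
    smul_eq_mul, smul_eq_mul]

theorem externalWork_add_dampingWork (hS : S.IsNewmarkStep h γ β s t w P) :
    externalWork γ s t + S.dampingWork γ s t
      = (t.q - s.q) ⬝ᵥ S.K *ᵥ (γ • t.q + (1 - γ) • s.q)
        + (t.q - s.q) ⬝ᵥ S.M *ᵥ (γ • t.a + (1 - γ) • s.a) := by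
  simp only [externalWork, dampingWork, ← hS.motion_start, ← hS.motion_end, mulVec_add, mulVec_smul,
    smul_add, dotProduct_add]
  ring

theorem dotProduct_mass_jump (hS : S.IsNewmarkStep h γ β s t w P) (x : ι → 𝕜) :
    x ⬝ᵥ S.M *ᵥ w = S.Gᵀ *ᵥ x ⬝ᵥ P := by
  rw [hS.impulse, dotProduct_mulVec, mulVec_transpose]

theorem kineticEnergy_sub [NeZero (2 : 𝕜)] (hM : S.M.IsSymm)
    (hS : S.IsNewmarkStep h γ β s t w P) :
    1 / 2 * (t.v ⬝ᵥ S.M *ᵥ t.v) - 1 / 2 * (s.v ⬝ᵥ S.M *ᵥ s.v)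
      = h * ((1 / 2 : 𝕜) • (s.v + t.v) ⬝ᵥ S.M *ᵥ (γ • t.a + (1 - γ) • s.a))
        + (1 / 2 : 𝕜) • (S.Gᵀ *ᵥ s.v + S.Gᵀ *ᵥ t.v) ⬝ᵥ P := by
  have midpoint : (1 / 2 : 𝕜) • t.v + (1 - 1 / 2 : 𝕜) • s.v = (1 / 2 : 𝕜) • (s.v + t.v) := by
    rw [sub_half, smul_add, add_comm]
  rw [half_dotProduct_mulVec_sub hM (1 / 2), sub_self, zero_mul, add_zero, midpoint,
    dotProduct_mulVec_comm_of_isSymm hM, hS.velocity_sub, mulVec_add, mulVec_smul, dotProduct_add,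
    dotProduct_smul, smul_eq_mul, hS.dotProduct_mass_jump, mulVec_smul, mulVec_add S.Gᵀ]

end IsNewmarkStep

end MechanicalSystem

theorem nonsmooth_newmark_algorithmic_energy_general {𝕜 ι κ : Type*} [Field 𝕜] [NeZero (2 : 𝕜)]
    [Fintype ι] [Fintype κ] {S : MechanicalSystem 𝕜 ι κ} (hM : S.M.IsSymm) (hK : S.K.IsSymm)
    {h γ β : 𝕜} {s t : NewmarkState 𝕜 ι} {w : ι → 𝕜} {P : κ → 𝕜}
    (hS : S.IsNewmarkStep h γ β s t w P) :
    S.algorithmicEnergy h γ β t - S.algorithmicEnergy h γ β s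
        - MechanicalSystem.externalWork γ s t - S.dampingWork γ s t
      = (1 / 2 - γ) * ((t.q - s.q) ⬝ᵥ S.K *ᵥ (t.q - s.q)
          + h ^ 2 / 2 * (2 * β - γ) * ((t.a - s.a) ⬝ᵥ S.M *ᵥ (t.a - s.a)))
        + (1 / 2 : 𝕜) • (S.Gᵀ *ᵥ s.v + S.Gᵀ *ᵥ t.v) ⬝ᵥ P := by
  have potential := half_dotProduct_mulVec_sub hK γ s.q t.q
  have kinetic := hS.kineticEnergy_sub hM
  have inertial := half_dotProduct_mulVec_sub hM γ s.a t.a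
  have work := hS.externalWork_add_dampingWork
  have inertialWork := hS.position_sub_dotProduct (S.M *ᵥ (γ • t.a + (1 - γ) • s.a))
  have quarter : h ^ 2 / 4 = h ^ 2 / 2 * (1 / 2) := by
    rw [div_mul_div_comm, mul_one]
    norm_num
  simp only [MechanicalSystem.algorithmicEnergy, MechanicalSystem.energy, quarter]
  linear_combination potential + kinetic + h ^ 2 / 2 * (2 * β - γ) * inertial - work - inertialWork

/-- Variation of the algorithmic energy over one step of the nonsmooth Newmark scheme. -/
theorem nonsmooth_newmark_algorithmic_energy
    (n m : ℕ) (hn : 1 ≤ n) (hm : 1 ≤ m)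
    (h γ β : ℝ) (hh : 0 < h)
    (M K C : Matrix (Fin n) (Fin n) ℝ) (G : Matrix (Fin n) (Fin m) ℝ)
    (hM : M.PosDef) (hK : K.PosSemidef)
    (qk qk1 vk vk1 ak ak1 w Fk Fk1 : Fin n → ℝ) (P : Fin m → ℝ)
    (hbalk : M.mulVec ak + K.mulVec qk + C.mulVec vk = Fk)
    (hbalk1 : M.mulVec ak1 + K.mulVec qk1 + C.mulVec vk1 = Fk1)
    (hw : M.mulVec w = G.mulVec P)
    (hv : vk1 = vk + (h * (1 - γ)) • ak + (h * γ) • ak1 + w)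
    (hq : qk1 = qk + h • vk + (h ^ 2 * (1/2 - β)) • ak + (h ^ 2 * β) • ak1
        + (h / 2) • w) :
    (1/2 * (vk1 ⬝ᵥ M.mulVec vk1) + 1/2 * (qk1 ⬝ᵥ K.mulVec qk1)
        + h ^ 2 / 4 * (2 * β - γ) * (ak1 ⬝ᵥ M.mulVec ak1))
      - (1/2 * (vk ⬝ᵥ M.mulVec vk) + 1/2 * (qk ⬝ᵥ K.mulVec qk)
        + h ^ 2 / 4 * (2 * β - γ) * (ak ⬝ᵥ M.mulVec ak))
      - (qk1 - qk) ⬝ᵥ (γ • Fk1 + (1 - γ) • Fk)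
      - (-((qk1 - qk) ⬝ᵥ C.mulVec (γ • vk1 + (1 - γ) • vk)))
    = (1/2 - γ) * ((qk1 - qk) ⬝ᵥ K.mulVec (qk1 - qk)
        + h ^ 2 / 2 * (2 * β - γ) * ((ak1 - ak) ⬝ᵥ M.mulVec (ak1 - ak)))
      + ((1/2 : ℝ) • (Gᵀ.mulVec vk + Gᵀ.mulVec vk1)) ⬝ᵥ P := by
  exact nonsmooth_newmark_algorithmic_energy_general (S := ⟨M, K, C, G⟩)
    (s := ⟨qk, vk, ak, Fk⟩) (t := ⟨qk1, vk1, ak1, Fk1⟩)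
    (isHermitian_iff_isSymm.mp hM.isHermitian) (isHermitian_iff_isSymm.mp hK.isHermitian)
    ⟨hbalk, hbalk1, hw, hv, hq⟩
end
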